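/- arXiv:1611.09067 — 4 statements merged into one kernel-verified Lean document; each statement's English description precedes it below -/
import Mathlib

section
/- Let α be a type and let S and S' be finite sets of pairs over α with |S| > 9 and |S'| > 9. Then every member of S meets every member of S' if and only if there exists an element a of α that belongs to every member of S and to every member of S'. (This is the combinatorial content of the key claim in the proof of Lemma A.1: 'if |S| > 9 the check can succeed iff all the multisets in S and in S' share a common element'.) -/
/-- Two multisets *meet* if they share a common element. -/
def Meets {α : Type*} (s t : Multiset α) : Prop := ∃ x, x ∈ s ∧ x ∈ t

theorem pair_of_mem {α : Type*} {s : Multiset α} (hs : Multiset.card s = 2) {a b : α}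
    (hab : a ≠ b) (ha : a ∈ s) (hb : b ∈ s) : s = {a, b} := by
  obtain ⟨x, y, rfl⟩ := Multiset.card_eq_two.1 hs
  simp only [Multiset.insert_eq_cons, Multiset.mem_cons, Multiset.mem_singleton] at ha hb
  rcases ha with rfl | rfl <;> rcases hb with rfl | rfl
  · exact absurd rfl hab
  · rfl
  · exact Multiset.pair_comm _ _
  · exact absurd rfl hab

theorem pair_of_meets {α : Type*} {s : Multiset α} (hs : Multiset.card s = 2) {x u v : α}
    (hx : x ∈ s) (hn : x ∉ ({u, v} : Multiset α)) (hm : Meets s {u, v}) :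
    s = {x, u} ∨ s = {x, v} := by
  obtain ⟨z, hz, hz'⟩ := hm
  have hxz : x ≠ z := by rintro rfl; exact hn hz'
  have := pair_of_mem hs hxz hx hz
  simp only [Multiset.insert_eq_cons, Multiset.mem_cons, Multiset.mem_singleton] at hz'
  rcases hz' with rfl | rfl
  · exact Or.inl this
  · exact Or.inr this

theorem exists_common {α : Type*} (S S' : Finset (Multiset α))
    (hS : ∀ s ∈ S, Multiset.card s = 2)
    (hS' : ∀ t ∈ S', Multiset.card t = 2)
    (hcard : 9 < S.card) (hcard' : 9 < S'.card)
    (h : ∀ s ∈ S, ∀ t ∈ S', Meets s t) : ∃ a, ∀ t ∈ S', a ∈ t := by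
  classical
  by_contra! hc
  obtain ⟨t, ht⟩ := Finset.card_pos.1 (by omega : 0 < S'.card)
  obtain ⟨x, y, rfl⟩ := Multiset.card_eq_two.1 (hS' t ht)
  obtain ⟨t1, ht1, hx⟩ := hc x
  obtain ⟨t2, ht2, hy⟩ := hc y
  obtain ⟨u, v, rfl⟩ := Multiset.card_eq_two.1 (hS' t1 ht1)
  obtain ⟨p, q, rfl⟩ := Multiset.card_eq_two.1 (hS' t2 ht2)
  have hsub : S ⊆ ({{x, u}, {x, v}, {y, p}, {y, q}} : Finset (Multiset α)) := by
    intro s hs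
    obtain ⟨z, hz, hz'⟩ := h s hs _ ht
    simp only [Finset.mem_insert, Finset.mem_singleton]
    rw [Multiset.insert_eq_cons, Multiset.mem_cons, Multiset.mem_singleton] at hz'
    rcases hz' with rfl | rfl
    · rcases pair_of_meets (hS s hs) hz hx (h s hs _ ht1) with e | e <;> tauto
    · rcases pair_of_meets (hS s hs) hz hy (h s hs _ ht2) with e | e <;> tauto
  have h1 := Finset.card_le_card hsub
  have h2 := Finset.card_le_four (a := ({x, u} : Multiset α)) (b := {x, v}) (c := {y, p}) (d := {y, q})
  omega

/-- If `S` and `S'` are finite sets of pairs (multisets of cardinality 2) over `α`,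
both of cardinality greater than 9, then every member of `S` meets every member of
`S'` iff there is a single element `a` belonging to every member of `S` and of `S'`. -/
theorem cross_intersecting_iff_common_element {α : Type*}
    (S S' : Finset (Multiset α))
    (hS : ∀ s ∈ S, Multiset.card s = 2)
    (hS' : ∀ t ∈ S', Multiset.card t = 2)
    (hcard : 9 < S.card) (hcard' : 9 < S'.card) :
    (∀ s ∈ S, ∀ t ∈ S', Meets s t) ↔
      ∃ a : α, (∀ s ∈ S, a ∈ s) ∧ (∀ t ∈ S', a ∈ t) := by
  constructor
  · intro h
    classical
    obtain ⟨a, ha⟩ := exists_common S S' hS hS' hcard hcard' h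
    refine ⟨a, ?_, ha⟩
    by_contra! hc
    obtain ⟨s, hs, has⟩ := hc
    obtain ⟨c, d, rfl⟩ := Multiset.card_eq_two.1 (hS s hs)
    have hsub : S' ⊆ ({{a, c}, {a, d}} : Finset (Multiset α)) := by
      intro t ht
      simp only [Finset.mem_insert, Finset.mem_singleton]
      obtain ⟨z, hz, hz'⟩ := h _ hs t ht
      exact pair_of_meets (hS' t ht) (ha t ht) has ⟨z, hz', hz⟩
    have h1 := Finset.card_le_card hsub
    have h2 := Finset.card_le_two (a := ({a, c} : Multiset α)) (b := {a, d})
    omega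
  · rintro ⟨a, h1, h2⟩ s hs t ht
    exact ⟨a, h1 s hs, h2 t ht⟩
end

section
/- Let α be a type, let S and S' be finite sets of pairs over α with |S'| > 9, and let a, b, c, d be pairwise distinct elements of α with {a,b} ∈ S, {a,c} ∈ S and {a,d} ∈ S. If every member of S meets every member of S', then a belongs to every member of S and to every member of S'. (This is Case 1 of the proof of Lemma A.1: 'if {a,b}, {a,c}, and {a,d} belong to S then the check succeeds iff a belongs to all the multisets in S and in S''.) -/
/-- Case 1 of the proof of Lemma A.1: if `S` contains the pairs `{a,b}`, `{a,c}`,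
`{a,d}` for pairwise distinct `a,b,c,d`, `|S'| > 9`, and every member of `S`
meets every member of `S'`, then `a` belongs to every member of `S` and of `S'`. -/
theorem common_element_of_three_pairs {α : Type*}
    (S S' : Finset (Multiset α))
    (hS : ∀ s ∈ S, Multiset.card s = 2)
    (hS' : ∀ t ∈ S', Multiset.card t = 2)
    (hcard' : 9 < S'.card)
    (a b c d : α)
    (hab : a ≠ b) (hac : a ≠ c) (had : a ≠ d)
    (hbc : b ≠ c) (hbd : b ≠ d) (hcd : c ≠ d)
    (h1 : ({a, b} : Multiset α) ∈ S)
    (h2 : ({a, c} : Multiset α) ∈ S)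
    (h3 : ({a, d} : Multiset α) ∈ S)
    (hmeet : ∀ s ∈ S, ∀ t ∈ S', Meets s t) :
    (∀ s ∈ S, a ∈ s) ∧ (∀ t ∈ S', a ∈ t) := by
  classical
  have hT : ∀ t ∈ S', a ∈ t := by
    intro t ht
    obtain ⟨x, y, rfl⟩ := Multiset.card_eq_two.1 (hS' t ht)
    obtain ⟨u, hu, hu'⟩ := hmeet _ h1 _ ht
    obtain ⟨v, hv, hv'⟩ := hmeet _ h2 _ ht
    obtain ⟨w, hw, hw'⟩ := hmeet _ h3 _ ht
    simp only [Multiset.insert_eq_cons, Multiset.mem_cons, Multiset.mem_singleton] at *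
    grind
  refine ⟨?_, hT⟩
  intro s hs
  by_contra has
  obtain ⟨x, y, rfl⟩ := Multiset.card_eq_two.1 (hS s hs)
  have hsub : S' ⊆ ({({a, x} : Multiset α), ({a, y} : Multiset α)} : Finset (Multiset α)) := by
    intro t ht
    obtain ⟨r, rfl⟩ := Multiset.exists_cons_of_mem (hT t ht)
    have hr := hS' _ ht
    rw [Multiset.card_cons] at hr
    obtain ⟨z, rfl⟩ := Multiset.card_eq_one.1 (show Multiset.card r = 1 by omega)
    obtain ⟨u, hu, hu'⟩ := hmeet _ hs _ ht
    simp only [Multiset.insert_eq_cons, Multiset.mem_cons, Multiset.mem_singleton,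
      Finset.mem_insert, Finset.mem_singleton] at has hu hu' ⊢
    grind
  have := Finset.card_le_card hsub
  have := Finset.card_le_two (a := ({a, x} : Multiset α)) (b := ({a, y} : Multiset α))
  omega
end

section
/- Let α be a type and let S be a finite set of pairs over α with |S| > 9. Then at least one of the following four patterns occurs in S: (1) there exist pairwise distinct a, b, c, d in α such that {a,b}, {a,c}, {a,d} ∈ S; (2) there exist pairwise distinct a, b, c, d in α such that {a,b}, {c,d} ∈ S; (3) there exist pairwise distinct a, b, c in α such that {a,a}, {b,c} ∈ S; (4) there exist distinct a, b in α such that {a,a}, {b,b} ∈ S. (This is the exhaustiveness claim 'the following cases cover all the possibilities' in the proof of Lemma A.1.) -/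
/-- Exhaustiveness of the case analysis in the proof of Lemma A.1: a finite set
`S` of pairs (multisets of cardinality 2) with `|S| > 9` contains one of four
patterns. -/
theorem case_analysis_exhaustive {α : Type*}
    (S : Finset (Multiset α))
    (hS : ∀ s ∈ S, Multiset.card s = 2)
    (hcard : 9 < S.card) :
    (∃ a b c d : α, a ≠ b ∧ a ≠ c ∧ a ≠ d ∧ b ≠ c ∧ b ≠ d ∧ c ≠ d ∧
      ({a, b} : Multiset α) ∈ S ∧ ({a, c} : Multiset α) ∈ S ∧
      ({a, d} : Multiset α) ∈ S) ∨
    (∃ a b c d : α, a ≠ b ∧ a ≠ c ∧ a ≠ d ∧ b ≠ c ∧ b ≠ d ∧ c ≠ d ∧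
      ({a, b} : Multiset α) ∈ S ∧ ({c, d} : Multiset α) ∈ S) ∨
    (∃ a b c : α, a ≠ b ∧ a ≠ c ∧ b ≠ c ∧
      ({a, a} : Multiset α) ∈ S ∧ ({b, c} : Multiset α) ∈ S) ∨
    (∃ a b : α, a ≠ b ∧
      ({a, a} : Multiset α) ∈ S ∧ ({b, b} : Multiset α) ∈ S) := by
  classical
  by_contra hcon
  obtain ⟨h1, h'⟩ := not_or.mp hcon
  obtain ⟨h2, h''⟩ := not_or.mp h'
  obtain ⟨h3, h4⟩ := not_or.mp h''
  have hL : (S.filter (fun s => ∃ x, s = {x, x})).card ≤ 1 := by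
    rw [Finset.card_le_one]
    intro s hs t ht
    obtain ⟨hs, x, rfl⟩ := Finset.mem_filter.mp hs
    obtain ⟨ht, y, rfl⟩ := Finset.mem_filter.mp ht
    by_contra hne
    exact h4 ⟨x, y, fun h => hne (by rw [h]), hs, ht⟩
  have hA : ∀ a, (S.filter (fun s => ∃ x, a ≠ x ∧ s = {a, x})).card ≤ 2 := by
    intro a
    by_contra hlt
    obtain ⟨s, hs, t, ht, u, hu, hst, hsu, htu⟩ := Finset.two_lt_card.mp (not_le.mp hlt)
    obtain ⟨hs, x, hx, rfl⟩ := Finset.mem_filter.mp hs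
    obtain ⟨ht, y, hy, rfl⟩ := Finset.mem_filter.mp ht
    obtain ⟨hu, z, hz, rfl⟩ := Finset.mem_filter.mp hu
    exact h1 ⟨a, x, y, z, hx, hy, hz, fun h => hst (by rw [h]), fun h => hsu (by rw [h]),
      fun h => htu (by rw [h]), hs, ht, hu⟩
  by_cases hN : ∃ a b : α, a ≠ b ∧ ({a, b} : Multiset α) ∈ S
  · obtain ⟨a, b, hab, habS⟩ := hN
    have hsub : S ⊆ S.filter (fun s => ∃ x, s = {x, x}) ∪
        (S.filter (fun s => ∃ x, a ≠ x ∧ s = {a, x}) ∪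
         S.filter (fun s => ∃ x, b ≠ x ∧ s = {b, x})) := by
      intro s hs
      obtain ⟨c, d, rfl⟩ := Multiset.card_eq_two.mp (hS s hs)
      simp only [Finset.mem_union, Finset.mem_filter, hs, true_and]
      by_cases hcd : c = d
      · exact Or.inl ⟨c, by rw [hcd]⟩
      right
      by_cases hac : a = c
      · exact Or.inl ⟨d, by rwa [hac], by rw [hac]⟩
      by_cases had : a = d
      · exact Or.inl ⟨c, hac, by rw [had, Multiset.pair_comm]⟩
      by_cases hbc : b = c
      · exact Or.inr ⟨d, by rwa [hbc], by rw [hbc]⟩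
      by_cases hbd : b = d
      · exact Or.inr ⟨c, hbc, by rw [hbd, Multiset.pair_comm]⟩
      exact (h2 ⟨a, b, c, d, hab, hac, had, hbc, hbd, hcd, habS, hs⟩).elim
    have e1 := Finset.card_le_card hsub
    have e2 := Finset.card_union_le (S.filter (fun s => ∃ x, s = {x, x}))
        (S.filter (fun s => ∃ x, a ≠ x ∧ s = {a, x}) ∪
         S.filter (fun s => ∃ x, b ≠ x ∧ s = {b, x}))
    have e3 := Finset.card_union_le (S.filter (fun s => ∃ x, a ≠ x ∧ s = {a, x}))
         (S.filter (fun s => ∃ x, b ≠ x ∧ s = {b, x}))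
    have := hA a
    have := hA b
    omega
  · have hsub : S ⊆ S.filter (fun s => ∃ x, s = {x, x}) := by
      intro s hs
      obtain ⟨c, d, rfl⟩ := Multiset.card_eq_two.mp (hS s hs)
      by_cases hcd : c = d
      · exact Finset.mem_filter.mpr ⟨hs, c, by rw [hcd]⟩
      exact (hN ⟨c, d, hcd, hs⟩).elim
    have := Finset.card_le_card hsub
    omega
end

section
/- Let L, A, B be types, let T₁ : A → L → A → Prop and T₂ : B → L → B → Prop be labelled transition relations, let H : Set L be a set of hidden labels, and assume that every T₁-transition whose label lies in H has label τ, for a fixed distinguished label τ ∈ H. Suppose R : A → B → Prop is a weak system bisimulation, i.e. for all a, b with R a b: (i) whenever T₁ a μ a', there exists a finite sequence of T₂-transitions starting from b, all with labels in H, reaching some state from which a T₂-transition with label μ leads to some b' with R a' b'; and (ii) whenever T₂ b η b', either there exists a' with T₁ a η a' and R a' b', or η ∈ H and R a b'. Define a finite weak trace of a state to be any list of labels obtained from the label sequence of a finite transition sequence starting at that state by removing all labels belonging to H. Then for all a, b with R a b, the states a (with respect to T₁) and b (with respect to T₂) have exactly the same finite weak traces: a list w of labels is a finite weak trace of a if and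 only if it is a finite weak trace of b. (This is the abstract content of Lemma 4.3 of the paper: weak system bisimilarity of a DIOC system and a DPOC system implies their weak trace equivalence; the coinductive proof given there is independent of the particular DIOC/DPOC transition systems.) -/
open scoped Classical

/-- `Steps T s w s'`: a finite transition sequence of the labelled transition
relation `T` from state `s` to state `s'` with label sequence `w`. -/
inductive Steps {St L : Type*} (T : St → L → St → Prop) : St → List L → St → Prop
  | nil (s : St) : Steps T s [] s
  | cons {s s' s'' : St} {μ : L} {w : List L} :
      T s μ s' → Steps T s' w s'' → Steps T s (μ :: w) s''

/-- `WeakTrace T H s w`: the list `w` is a finite weak trace of state `s`,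
i.e. `w` is obtained from the label sequence of some finite transition sequence
starting at `s` by removing all labels belonging to the set `H` of hidden labels. -/
def WeakTrace {St L : Type*} (T : St → L → St → Prop) (H : Set L)
    (s : St) (w : List L) : Prop :=
  ∃ (tr : List L) (s' : St), Steps T s tr s' ∧
    w = tr.filter (fun l => decide (l ∉ H))

theorem Steps.append_aux {St L : Type*} {T : St → L → St → Prop} {s s' s'' : St}
    {u v : List L} (h : Steps T s u s') (h2 : Steps T s' v s'') : Steps T s (u ++ v) s'' := by
  induction h with
  | nil s => exact h2
  | cons ht _ ih => exact Steps.cons ht (ih h2)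

/-- Abstract content of Lemma 4.3: a weak system bisimulation between two
labelled transition systems implies equality of the sets of finite weak traces
of related states. -/
theorem weak_system_bisimulation_implies_weak_trace_equivalence
    {L A B : Type*}
    (T₁ : A → L → A → Prop) (T₂ : B → L → B → Prop)
    (H : Set L) (τ : L) (hτ : τ ∈ H)
    (hsilent : ∀ (a : A) (l : L) (a' : A), T₁ a l a' → l ∈ H → l = τ)
    (R : A → B → Prop)
    (hbisim₁ : ∀ (a : A) (b : B), R a b → ∀ (μ : L) (a' : A), T₁ a μ a' →
      ∃ (w : List L) (b₁ b' : B),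
        Steps T₂ b w b₁ ∧ (∀ l ∈ w, l ∈ H) ∧ T₂ b₁ μ b' ∧ R a' b')
    (hbisim₂ : ∀ (a : A) (b : B), R a b → ∀ (η : L) (b' : B), T₂ b η b' →
      (∃ a' : A, T₁ a η a' ∧ R a' b') ∨ (η ∈ H ∧ R a b')) :
    ∀ (a : A) (b : B), R a b →
      ∀ w : List L, WeakTrace T₁ H a w ↔ WeakTrace T₂ H b w := by
  intro a b hR w
  constructor
  · rintro ⟨tr, s', hs, rfl⟩
    induction hs generalizing b with
    | nil s => exact ⟨[], b, Steps.nil b, rfl⟩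
    | @cons s s1 s2 μ u ht _ ih =>
      obtain ⟨v, b₁, b', hv, hH, hT, hR'⟩ := hbisim₁ _ _ hR _ _ ht
      obtain ⟨tr', c, hc, he⟩ := ih _ hR'
      refine ⟨v ++ μ :: tr', c, hv.append_aux (Steps.cons hT hc), ?_⟩
      have h0 : v.filter (fun l => decide (l ∉ H)) = [] := by
        simpa [List.filter_eq_nil_iff] using hH
      rw [List.filter_append, h0, List.nil_append, List.filter_cons, List.filter_cons, he]
  · rintro ⟨tr, s', hs, rfl⟩
    induction hs generalizing a with
    | nil s => exact ⟨[], a, Steps.nil a, rfl⟩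
    | @cons s s1 s2 μ u ht _ ih =>
      rcases hbisim₂ _ _ hR _ _ ht with ⟨a', hT, hR'⟩ | ⟨hH, hR'⟩
      · obtain ⟨tr', c, hc, he⟩ := ih _ hR'
        refine ⟨μ :: tr', c, Steps.cons hT hc, ?_⟩
        rw [List.filter_cons, List.filter_cons, he]
      · obtain ⟨tr', c, hc, he⟩ := ih _ hR'
        refine ⟨tr', c, hc, ?_⟩
        rw [← he]
        simp [hH]
end
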